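/- arXiv:1212.0615 — 2 statements merged into one kernel-verified Lean document; each statement's English description precedes it below -/
import Mathlib

section
/- Let A be a finite-dimensional associative algebra over a field of characteristic zero. Then A is nilpotent if and only if A admits an invertible (bijective) Leibniz-derivation of some order n ≥ 2. -/
/-- The left-normed product `((x₁x₂)x₃)⋯xₙ` of a list of elements
(`0` for the empty list, which we never use). -/
def lnProd {A : Type*} [Mul A] [Zero A] : List A → A
  | [] => 0
  | a :: l => l.foldl (· * ·) a

/-- A Leibniz-derivation of order `n`: a linear endomorphism `φ` with
`φ(x₁⋯xₙ) = Σᵢ x₁⋯φ(xᵢ)⋯xₙ` (left-normed products). -/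
def IsLeibnizDer {F A : Type*} [Field F] [NonUnitalNonAssocRing A] [Module F A]
    (n : ℕ) (φ : A →ₗ[F] A) : Prop :=
  ∀ x : Fin n → A,
    φ (lnProd (List.ofFn x)) =
      ∑ i : Fin n, lnProd (List.ofFn (Function.update x i (φ (x i))))

/-!
Write `τ a` for the trace of left multiplication by `a`. In characteristic zero an endomorphism is
nilpotent once the traces of all its high powers vanish. Hence `τ` vanishes on the kernel of the
form `(a, b) ↦ τ (a * b)`, and by duality `τ = τ (· * u)` for some `u`: under the trace, `u` acts as
a unit.

Let `φ` be a Leibniz-derivation of order `m + 2`. Its Leibniz rule expresses the commutator of `φ`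
with the left multiplication by `x₁⋯xₘ₊₁`, whose trace is zero; at `(c, u, …, u)` this gives
`τ (φ c) + m τ (c * φ u) = 0`. Applying `τ` to the Leibniz rule at `(c, u, …, u)` with one more `u`
gives `τ (φ (c u⋯u)) = τ (φ c) + (m + 1) τ (c * φ u)`. The two identities force `τ (c * φ u) = 0`,
so `τ ∘ φ = 0`, and `τ = 0` if `φ` is surjective. All left multiplications are then nilpotent, and
Engel's theorem makes the algebra nilpotent. For the converse, once all products of `n` elements
vanish the identity is a Leibniz-derivation of order `n`.
-/

section LnProd

variable {A : Type*}

theorem lnProd_cons_cons [Mul A] [Zero A] (a b : A) (l : List A) :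
    lnProd (a :: b :: l) = lnProd (a * b :: l) :=
  rfl

theorem lnProd_concat [Mul A] [Zero A] {l : List A} (hl : l ≠ []) (y : A) :
    lnProd (l ++ [y]) = lnProd l * y := by
  obtain ⟨a, l, rfl⟩ := List.exists_cons_of_ne_nil hl
  simp [lnProd]

theorem lnProd_cons [SemigroupWithZero A] (a : A) {l : List A} (hl : l ≠ []) :
    lnProd (a :: l) = a * lnProd l := by
  obtain ⟨b, l, rfl⟩ := List.exists_cons_of_ne_nil hl
  induction l generalizing b with
  | nil => rfl
  | cons c l ih =>
    rw [lnProd_cons_cons, lnProd_cons_cons, mul_assoc, ← lnProd_cons_cons, ih _ (by simp),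
      lnProd_cons_cons]

theorem lnProd_ofFn_snoc [Mul A] [Zero A] {m : ℕ} (x : Fin (m + 1) → A) (y : A) :
    lnProd (List.ofFn (Fin.snoc x y : Fin (m + 2) → A)) = lnProd (List.ofFn x) * y := by
  rw [List.ofFn_succ', List.concat_eq_append]
  simp only [Fin.snoc_castSucc, Fin.snoc_last]
  exact lnProd_concat (by simp) y

theorem lnProd_ofFn_cons_cons [Mul A] [Zero A] {k : ℕ} (a b : A) (x : Fin k → A) :
    lnProd (List.ofFn (Fin.cons a (Fin.cons b x : Fin (k + 1) → A) : Fin (k + 2) → A)) =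
      lnProd (List.ofFn (Fin.cons (a * b) x : Fin (k + 1) → A)) := by
  simp only [List.ofFn_cons, lnProd_cons_cons]

/-- The tuple `(c, u, …, u)` of length `k + 1`, the argument at which Leibniz rules are
evaluated below. -/
def consConst (c u : A) (k : ℕ) : Fin (k + 1) → A :=
  Fin.cons c fun _ => u

theorem consConst_succ (c u : A) (k : ℕ) :
    consConst c u (k + 1) = Fin.cons c (consConst u u k) := by
  rw [consConst, consConst, ← Fin.cons_self_tail fun _ : Fin (k + 1) => u]
  rfl

theorem update_consConst_zero (c u z : A) (k : ℕ) :
    Function.update (consConst c u k) 0 z = consConst z u k := by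
  rw [consConst, Fin.update_cons_zero, consConst]

theorem update_consConst_succ (c u z : A) {k : ℕ} (i : Fin k) :
    Function.update (consConst c u k) i.succ z =
      Fin.cons c (Function.update (fun _ : Fin k => u) i z) := by
  rw [consConst, Fin.cons_update]

theorem lnProd_consConst_succ [Mul A] [Zero A] (c u : A) (k : ℕ) :
    lnProd (List.ofFn (consConst c u (k + 1))) = lnProd (List.ofFn (consConst (c * u) u k)) := by
  rw [consConst_succ]
  exact lnProd_ofFn_cons_cons c u _

end LnProd

/-- The element `u` behaves as a two-sided unit inside the arguments of the trace-like function
`τ`; it replaces the unit that the algebra may lack. -/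
structure IsTracialUnit {A M : Type*} [Mul A] (τ : A → M) (u : A) : Prop where
  apply_mul_comm : ∀ a b, τ (a * b) = τ (b * a)
  apply_mul_right : ∀ a, τ (a * u) = τ a

namespace IsTracialUnit

variable {A M : Type*} [SemigroupWithZero A] {τ : A → M} {u : A}

theorem apply_mul_mul (h : IsTracialUnit τ u) (a b : A) : τ (a * u * b) = τ (a * b) := by
  rw [h.apply_mul_comm, ← mul_assoc, h.apply_mul_right, h.apply_mul_comm]

theorem apply_lnProd_consConst (h : IsTracialUnit τ u) (c : A) (k : ℕ) :
    τ (lnProd (List.ofFn (consConst c u k))) = τ c := by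
  induction k generalizing c with
  | zero => simp [consConst, lnProd]
  | succ k ih => rw [lnProd_consConst_succ, ih, h.apply_mul_right]

theorem apply_lnProd_consConst_mul (h : IsTracialUnit τ u) (c z : A) (k : ℕ) :
    τ (lnProd (List.ofFn (consConst c u k)) * z) = τ (c * z) := by
  induction k generalizing c with
  | zero => simp [consConst, lnProd]
  | succ k ih => rw [lnProd_consConst_succ, ih, h.apply_mul_mul]

theorem apply_lnProd_update_consConst_succ (h : IsTracialUnit τ u) (c z : A) {k : ℕ} (i : Fin k) :
    τ (lnProd (List.ofFn (Function.update (consConst c u k) i.succ z))) = τ (c * z) := by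
  induction k generalizing c with
  | zero => exact i.elim0
  | succ k ih =>
    rw [update_consConst_succ, ← Fin.cons_self_tail fun _ : Fin (k + 1) => u]
    cases i using Fin.cases with
    | zero =>
      rw [Fin.update_cons_zero, lnProd_ofFn_cons_cons]
      exact h.apply_lnProd_consConst (c * z) k
    | succ i =>
      rw [← Fin.cons_update, lnProd_ofFn_cons_cons, Fin.cons_update]
      exact (ih _ i).trans (h.apply_mul_mul c z)

theorem sum_apply_lnProd_update_consConst [AddCommMonoid M] (h : IsTracialUnit τ u) (φ : A → A)
    (c : A) (k : ℕ) :
    ∑ i, τ (lnProd (List.ofFn (Function.update (consConst c u k) i (φ (consConst c u k i))))) =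
      τ (φ c) + k • τ (c * φ u) := by
  have hzero : consConst c u k 0 = c := rfl
  have hsucc : ∀ i : Fin k, consConst c u k i.succ = u := fun _ => rfl
  simp only [Fin.sum_univ_succ, hzero, hsucc, update_consConst_zero, h.apply_lnProd_consConst,
    h.apply_lnProd_update_consConst_succ, Finset.sum_const, Finset.card_univ, Fintype.card_fin]

end IsTracialUnit

section Nilpotent

open Polynomial

/-- The element `aeval x (X ^ K * p)` is the Fitting idempotent of `x`. -/
theorem exists_isIdempotentElem_aeval_X_pow_mul {F R : Type*} [Field F] [Ring R] [Algebra F R]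
    {x : R} (hx : IsIntegral F x) (K : ℕ) :
    ∃ p : F[X], IsIdempotentElem (aeval x (X ^ K * p)) ∧
      ∃ s, x ^ s * (1 - aeval x (X ^ K * p)) = 0 := by
  obtain ⟨q, hq, hXq⟩ := exists_eq_pow_rootMultiplicity_mul_and_not_dvd _ (minpoly.ne_zero hx) 0
  set s := rootMultiplicity 0 (minpoly F x)
  simp only [map_zero, sub_zero] at hq hXq
  obtain ⟨a, b, hab⟩ : IsCoprime (X ^ (K + s)) q :=
    ((irreducible_X.coprime_iff_not_dvd).2 hXq).pow_left
  have hxq : x ^ s * aeval x q = 0 := by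
    simpa [hq] using minpoly.aeval F x
  have hsub : 1 - aeval x (X ^ K * (X ^ s * a)) = aeval x (q * b) := by
    rw [← map_one (aeval (R := F) x), ← map_sub, ← hab]
    ring_nf
  refine ⟨X ^ s * a, ?_, s, ?_⟩
  · have hmul : aeval x (X ^ K * (X ^ s * a)) * (1 - aeval x (X ^ K * (X ^ s * a))) = 0 := by
      rw [hsub, ← map_mul,
        show X ^ K * (X ^ s * a) * (q * b) = X ^ s * q * (X ^ K * a * b) by ring]
      simp [hxq]
    rw [mul_sub, mul_one, sub_eq_zero] at hmul
    exact hmul.symm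
  · rw [hsub, map_mul, ← mul_assoc, hxq, zero_mul]

theorem isNilpotent_of_trace_pow_eq_zero {F V : Type*} [Field F] [CharZero F] [AddCommGroup V]
    [Module F V] [FiniteDimensional F V] {T : Module.End F V} (K : ℕ)
    (hT : ∀ k ≥ K, LinearMap.trace F V (T ^ k) = 0) : IsNilpotent T := by
  obtain ⟨p, hidem, s, hs⟩ :=
    exists_isIdempotentElem_aeval_X_pow_mul (Algebra.IsIntegral.isIntegral (R := F) T) K
  set e := aeval T (X ^ K * p) with he
  have htrace : LinearMap.trace F V e = 0 := by
    rw [he, map_mul (aeval T), map_pow (aeval T), aeval_X, aeval_eq_sum_range, Finset.mul_sum,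
      map_sum]
    refine Finset.sum_eq_zero fun i _ => ?_
    rw [mul_smul_comm, ← pow_add, map_smul, hT _ (Nat.le_add_right K i), smul_zero]
  -- The trace of a projection is its rank, which in characteristic zero can be read off.
  have hrank : Module.finrank F (LinearMap.range e) = 0 := by
    have htrace_eq_rank := (LinearMap.IsIdempotentElem.isProj_range e hidem).trace
    rw [htrace] at htrace_eq_rank
    exact_mod_cast htrace_eq_rank.symm
  have hezero : e = 0 := LinearMap.range_eq_bot.1 (Submodule.finrank_eq_zero.1 hrank)
  exact ⟨s, by simpa [hezero] using hs⟩

end Nilpotent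

section Engel

attribute [local instance] LieRing.ofAssociativeRing

theorem exists_lnProd_eq_zero_of_isNilpotent_mul {R A : Type*} [CommRing R] [NonUnitalRing A]
    [Module R A] [SMulCommClass R A A] [IsScalarTower R A A] [IsNoetherian R A]
    (hnil : ∀ a : A, IsNilpotent (LinearMap.mul R A a)) :
    ∃ k : ℕ, ∀ l : List A, l.length = k + 1 → lnProd l = 0 := by
  let L : LieSubalgebra R (Module.End R A) :=
    { LinearMap.range (LinearMap.mul R A) with
      lie_mem' := by
        rintro _ _ ⟨a, rfl⟩ ⟨b, rfl⟩
        refine ⟨a * b - b * a, ?_⟩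
        ext c
        simp [Ring.lie_def, mul_assoc] }
  -- Engel's theorem for the Lie algebra of left multiplications.
  have hL : LieModule.IsNilpotent L A := by
    rw [LieModule.isNilpotent_iff_forall' (R := R)]
    rintro ⟨_, a, rfl⟩
    exact hnil a
  obtain ⟨k, hk⟩ := (LieModule.isNilpotent_iff R L A).1 hL
  have hmem : ∀ (k : ℕ) (l : List A), l.length = k + 1 →
      lnProd l ∈ LieModule.lowerCentralSeries R L A k := by
    intro k
    induction k with
    | zero => simp
    | succ k ih =>
      intro l hl
      obtain ⟨a, l, rfl⟩ := List.exists_cons_of_length_eq_add_one hl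
      have hlen : l.length = k + 1 := by simpa using hl
      rw [lnProd_cons a (List.ne_nil_of_length_eq_add_one hlen),
        LieModule.lowerCentralSeries_succ]
      exact LieSubmodule.lie_mem_lie (x := (⟨_, a, rfl⟩ : L)) (LieSubmodule.mem_top _) (ih l hlen)
  exact ⟨k, fun l hl => by simpa [hk] using hmem k l hl⟩

end Engel

section LeftTrace

variable (R A : Type*) [CommSemiring R] [NonUnitalSemiring A] [Module R A] [SMulCommClass R A A]
  [IsScalarTower R A A]

/-- The trace of the left regular representation of a possibly non-unital algebra. -/
noncomputable def leftTrace : A →ₗ[R] R :=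
  LinearMap.trace R A ∘ₗ LinearMap.mul R A

variable {R A}

theorem leftTrace_apply (a : A) : leftTrace R A a = LinearMap.trace R A (LinearMap.mul R A a) :=
  rfl

theorem linearMap_mul_mul (a b : A) :
    LinearMap.mul R A (a * b) = LinearMap.mul R A a * LinearMap.mul R A b :=
  map_mul (NonUnitalAlgHom.lmul R A) a b

theorem leftTrace_mul_comm (a b : A) : leftTrace R A (a * b) = leftTrace R A (b * a) := by
  rw [leftTrace_apply, leftTrace_apply, linearMap_mul_mul, linearMap_mul_mul,
    LinearMap.trace_mul_comm]

theorem trace_mul_pow_succ (a : A) (k : ℕ) :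
    LinearMap.trace R A (LinearMap.mul R A a ^ (k + 1)) =
      leftTrace R A ((LinearMap.mul R A a ^ k) a) := by
  rw [leftTrace_apply]
  congr 1
  induction k with
  | zero => simp
  | succ k ih =>
    calc LinearMap.mul R A a ^ (k + 2)
        = LinearMap.mul R A a * LinearMap.mul R A a ^ (k + 1) := pow_succ' _ _
      _ = LinearMap.mul R A a * LinearMap.mul R A ((LinearMap.mul R A a ^ k) a) := by rw [ih]
      _ = LinearMap.mul R A ((LinearMap.mul R A a ^ (k + 1)) a) := by
        rw [← linearMap_mul_mul, pow_succ']
        rfl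

end LeftTrace

section CharZero

variable {F A : Type*} [Field F] [CharZero F] [NonUnitalRing A] [Module F A] [SMulCommClass F A A]
  [IsScalarTower F A A] [FiniteDimensional F A]

theorem isNilpotent_mul_of_leftTrace_eq_zero (hzero : leftTrace F A = 0) (a : A) :
    IsNilpotent (LinearMap.mul F A a) := by
  refine isNilpotent_of_trace_pow_eq_zero 1 fun k hk => ?_
  obtain ⟨j, rfl⟩ := Nat.exists_eq_add_of_le' hk
  rw [trace_mul_pow_succ, hzero, LinearMap.zero_apply]

theorem leftTrace_eq_zero_of_forall_leftTrace_mul_eq_zero {a : A}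
    (ha : ∀ b, leftTrace F A (a * b) = 0) : leftTrace F A a = 0 := by
  have hnil : IsNilpotent (LinearMap.mul F A a) := by
    refine isNilpotent_of_trace_pow_eq_zero 2 fun k hk => ?_
    obtain ⟨j, rfl⟩ := Nat.exists_eq_add_of_le' hk
    rw [trace_mul_pow_succ, pow_succ']
    exact ha _
  exact (LinearMap.isNilpotent_trace_of_isNilpotent hnil).eq_zero

variable (F A) in
theorem exists_isTracialUnit_leftTrace : ∃ u : A, IsTracialUnit (leftTrace F A) u := by
  let B : LinearMap.BilinForm F A := (LinearMap.mul F A).compr₂ (leftTrace F A)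
  have hmem : leftTrace F A ∈ (LinearMap.ker B).dualAnnihilator := by
    rw [Submodule.mem_dualAnnihilator]
    exact fun a ha => leftTrace_eq_zero_of_forall_leftTrace_mul_eq_zero (LinearMap.congr_fun ha)
  rw [LinearMap.dualAnnihilator_ker_eq_range_flip] at hmem
  obtain ⟨u, hu⟩ := hmem
  exact ⟨u, leftTrace_mul_comm, LinearMap.congr_fun hu⟩

end CharZero

namespace IsLeibnizDer

variable {F A : Type*} [Field F]

theorem of_forall_lnProd_eq_zero [NonUnitalNonAssocRing A] [Module F A] {n : ℕ}
    (hzero : ∀ x : Fin n → A, lnProd (List.ofFn x) = 0) (φ : A →ₗ[F] A) : IsLeibnizDer n φ := by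
  intro x
  simp only [hzero, map_zero, Finset.sum_const_zero]

variable [NonUnitalRing A] [Module F A] [SMulCommClass F A A] [IsScalarTower F A A]
  {m : ℕ} {φ : A →ₗ[F] A}

/-- Fixing all but the last argument, the Leibniz rule computes the commutator of `φ` with a left
multiplication; commutators have trace zero. -/
theorem sum_leftTrace_update_eq_zero (hφ : IsLeibnizDer (m + 2) φ) (x : Fin (m + 1) → A) :
    ∑ i, leftTrace F A (lnProd (List.ofFn (Function.update x i (φ (x i))))) = 0 := by
  have hcomm : φ * LinearMap.mul F A (lnProd (List.ofFn x)) =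
      ∑ i, LinearMap.mul F A (lnProd (List.ofFn (Function.update x i (φ (x i))))) +
        LinearMap.mul F A (lnProd (List.ofFn x)) * φ := by
    ext y
    have hsnoc := hφ (Fin.snoc x y)
    rw [Fin.sum_univ_castSucc] at hsnoc
    simp only [Fin.snoc_castSucc, Fin.snoc_last, ← Fin.snoc_update, Fin.update_snoc_last,
      lnProd_ofFn_snoc] at hsnoc
    simpa using hsnoc
  have htrace := congrArg (LinearMap.trace F A) hcomm
  rw [map_add, LinearMap.trace_mul_comm F φ, map_sum] at htrace
  exact right_eq_add.1 htrace

variable {u : A}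

theorem leftTrace_apply_add_nsmul_eq_zero (hφ : IsLeibnizDer (m + 2) φ)
    (hu : IsTracialUnit (leftTrace F A) u) (c : A) :
    leftTrace F A (φ c) + m • leftTrace F A (c * φ u) = 0 := by
  rw [← hu.sum_apply_lnProd_update_consConst φ c m]
  exact hφ.sum_leftTrace_update_eq_zero _

theorem leftTrace_mul_apply_eq_zero [CharZero F] (hφ : IsLeibnizDer (m + 2) φ)
    (hu : IsTracialUnit (leftTrace F A) u) (c : A) : leftTrace F A (c * φ u) = 0 := by
  have hleibniz := congrArg (leftTrace F A) (hφ (consConst c u (m + 1)))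
  rw [map_sum, hu.sum_apply_lnProd_update_consConst φ c (m + 1)] at hleibniz
  have hprod := hφ.leftTrace_apply_add_nsmul_eq_zero hu
    (lnProd (List.ofFn (consConst c u (m + 1))))
  rw [hu.apply_lnProd_consConst_mul, hleibniz] at hprod
  have hc := hφ.leftTrace_apply_add_nsmul_eq_zero hu c
  have hsmul : (m + 1) • leftTrace F A (c * φ u) = 0 := by
    linear_combination hprod - hc
  exact (smul_eq_zero.1 hsmul).resolve_left m.succ_ne_zero

theorem leftTrace_apply_eq_zero [CharZero F] [FiniteDimensional F A]
    (hφ : IsLeibnizDer (m + 2) φ) (c : A) : leftTrace F A (φ c) = 0 := by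
  obtain ⟨u, hu⟩ := exists_isTracialUnit_leftTrace F A
  simpa [hφ.leftTrace_mul_apply_eq_zero hu c] using hφ.leftTrace_apply_add_nsmul_eq_zero hu c

end IsLeibnizDer

/-- A finite-dimensional associative algebra over a field of characteristic zero is
nilpotent iff it admits an invertible Leibniz-derivation of some order `n ≥ 2`. -/
theorem associative_nilpotent_iff_invertible_leibniz_derivation
    {F A : Type*} [Field F] [CharZero F]
    [NonUnitalRing A] [Module F A] [SMulCommClass F A A] [IsScalarTower F A A]
    [FiniteDimensional F A] :
    (∃ n : ℕ, 1 ≤ n ∧ ∀ x : Fin n → A, lnProd (List.ofFn x) = 0) ↔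
      (∃ n : ℕ, 2 ≤ n ∧ ∃ φ : A →ₗ[F] A, Function.Bijective φ ∧ IsLeibnizDer n φ) := by
  constructor
  · rintro ⟨n, hn, hzero⟩
    obtain ⟨k, rfl⟩ := Nat.exists_eq_add_of_le' hn
    have hzero_succ : ∀ x : Fin (k + 2) → A, lnProd (List.ofFn x) = 0 := fun x => by
      rw [← Fin.snoc_init_self x, lnProd_ofFn_snoc, hzero, zero_mul]
    exact ⟨k + 2, Nat.le_add_left 2 k, LinearMap.id, Function.bijective_id,
      .of_forall_lnProd_eq_zero hzero_succ _⟩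
  · rintro ⟨n, hn, φ, hbij, hφ⟩
    obtain ⟨m, rfl⟩ := Nat.exists_eq_add_of_le' hn
    have htrace : leftTrace F A = 0 :=
      LinearMap.ext <| hbij.surjective.forall.2 hφ.leftTrace_apply_eq_zero
    obtain ⟨k, hk⟩ :=
      exists_lnProd_eq_zero_of_isNilpotent_mul (isNilpotent_mul_of_leftTrace_eq_zero htrace)
    exact ⟨k + 1, Nat.le_add_left 1 k, fun x => hk _ List.length_ofFn⟩
end

section
/- Let J be a (not necessarily associative) algebra over a field F such that every F-linear endomorphism of J is a quasiderivation. If the annihilator Ann(J) = {a ∈ J | a*J = 0 and J*a = 0} contains a nonzero element, then J has zero multiplication: x*y = 0 for all x, y ∈ J. -/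
/-!
A quasiderivation `f` preserves the left annihilator: if `a * x = 0` for all `x`, then
`Q (a * y) = f a * y + a * f y` collapses to `f a * y = 0`. A vector space is a simple module over
its endomorphism ring, so the endomorphisms carry a nonzero left annihilator `a` to every vector.
-/

/-- A quasiderivation of a possibly nonassociative algebra `A`: an endomorphism satisfying the
Leibniz rule with a second endomorphism `Q` acting on the product. The multiplication is only
biadditive, so that `R` may be noncommutative. -/
def IsQuasiderivation {R A : Type*} [Semiring R] [NonUnitalNonAssocSemiring A] [Module R A]
    (f : Module.End R A) : Prop :=
  ∃ Q : Module.End R A, ∀ x y : A, Q (x * y) = f x * y + x * f y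

theorem IsQuasiderivation.apply_mul_eq_zero {R A : Type*} [Semiring R]
    [NonUnitalNonAssocSemiring A] [Module R A] {f : Module.End R A} (hf : IsQuasiderivation f)
    {a : A} (ha : ∀ x : A, a * x = 0) (y : A) : f a * y = 0 := by
  obtain ⟨Q, hQ⟩ := hf
  calc
    f a * y = f a * y + a * f y := by rw [ha, add_zero]
    _ = Q (a * y) := (hQ a y).symm
    _ = 0 := by rw [ha, map_zero]

theorem zero_mul_of_nonzero_annihilator_general {R A : Type*} [Semiring R]
    [NonUnitalNonAssocRing A] [Module R A] [IsSimpleModule (Module.End R A) A]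
    (hq : ∀ f : Module.End R A, IsQuasiderivation f)
    (hann : ∃ a : A, a ≠ 0 ∧ ∀ x : A, a * x = 0) (x y : A) : x * y = 0 := by
  obtain ⟨a, ha, hmul⟩ := hann
  obtain ⟨f, rfl⟩ : ∃ f : Module.End R A, f a = x :=
    IsSimpleModule.toSpanSingleton_surjective (Module.End R A) ha x
  exact (hq f).apply_mul_eq_zero hmul y

/-- If every linear endomorphism of an algebra `J` is a quasiderivation and the
annihilator of `J` contains a nonzero element, then `J` has zero multiplication. -/
theorem zero_mul_of_nonzero_annihilator
    {F J : Type*} [Field F]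
    [NonUnitalNonAssocRing J] [Module F J] [SMulCommClass F J J] [IsScalarTower F J J]
    (hq : ∀ f : J →ₗ[F] J, ∃ Q : J →ₗ[F] J, ∀ x y : J, Q (x * y) = f x * y + x * f y)
    (hann : ∃ a : J, a ≠ 0 ∧ ∀ x : J, a * x = 0 ∧ x * a = 0) :
    ∀ x y : J, x * y = 0 := by
  obtain ⟨a, ha, hmul⟩ := hann
  have : Nontrivial J := nontrivial_of_ne a 0 ha
  exact zero_mul_of_nonzero_annihilator_general hq ⟨a, ha, fun x ↦ (hmul x).1⟩
end
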